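/- Let V be an allocation of h seats on a multi-level apportionment instance, let i be a non-leaf node, and suppose that V_i / R_i < min_{a ∈ A(i)} (V_a + 1)/R_a. Then there exists a child c of i such that V_c / R_c < min_{a ∈ A(i) ∪ {i}} (V_a + 1)/R_a. Consequently, the upper-compliant multi-level quota method is well-defined: in any run, whenever a non-leaf node receives a seat, at least one of its children is eligible to receive the seat. -/

import Mathlib

/-- A multi-level apportionment instance: a rooted tree on nodes `0, …, n`
(root `0`, encoded by a parent function with `parent i < i` for `i ≠ 0`),
together with entitlements `W`. -/
structure MLA where
  n : ℕ
  parent : Fin (n + 1) → Fin (n + 1)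
  parent_lt : ∀ i : Fin (n + 1), i ≠ 0 → (parent i : ℕ) < (i : ℕ)
  W : Fin (n + 1) → ℝ
  W_pos : ∀ i, 0 < W i
  W_le_one : ∀ i, W i ≤ 1
  W_root : W 0 = 1
  W_sum : ∀ i : Fin (n + 1),
    (Finset.univ.filter (fun c => c ≠ 0 ∧ parent c = i)).Nonempty →
    ∑ c ∈ Finset.univ.filter (fun c => c ≠ 0 ∧ parent c = i), W c = 1

namespace MLA

variable (T : MLA)

/-- The set of children of node `i`. -/
def children (i : Fin (T.n + 1)) : Finset (Fin (T.n + 1)) :=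
  Finset.univ.filter (fun c => c ≠ 0 ∧ T.parent c = i)

/-- The ancestor set `A(i)`: `A(0) = {0}` and `A(i) = {parent i} ∪ A(parent i)`. -/
def ancestors (i : Fin (T.n + 1)) : Finset (Fin (T.n + 1)) :=
  if h : i = 0 then {0} else insert (T.parent i) (ancestors (T.parent i))
termination_by (i : ℕ)
decreasing_by exact T.parent_lt i h

/-- The entitlement of node `i` relative to the root: `R i = ∏_{a ∈ A(i) ∪ {i}} W a`. -/
def R (i : Fin (T.n + 1)) : ℝ := ∏ a ∈ insert i (T.ancestors i), T.W a

/-- `V` is an allocation of `h` seats. -/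
def IsAlloc (h : ℕ) (V : Fin (T.n + 1) → ℕ) : Prop :=
  V 0 = h ∧ ∀ i, (T.children i).Nonempty → V i = ∑ c ∈ T.children i, V c

/-- `V` fulfills lower quota: `V i ≥ LQ i = max_{a ∈ A(i)} ⌊(R i / R a) · V a⌋`. -/
def FulfillsLowerQuota (V : Fin (T.n + 1) → ℕ) : Prop :=
  ∀ i, ∀ a ∈ T.ancestors i, ⌊T.R i / T.R a * (V a : ℝ)⌋ ≤ (V i : ℤ)

/-- `V` fulfills upper quota: `V i ≤ UQ i = min_{a ∈ A(i)} ⌈(R i / R a) · V a⌉`. -/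
def FulfillsUpperQuota (V : Fin (T.n + 1) → ℕ) : Prop :=
  ∀ i, ∀ a ∈ T.ancestors i, (V i : ℤ) ≤ ⌈T.R i / T.R a * (V a : ℝ)⌉


/-- `P` is the set of nodes receiving the new seat in one step of an iterative
method with selection criterion `crit` (to be minimized among children) and
eligibility constraint `elig`: `P` is a root-to-leaf path, each non-root node on
the path is an eligible child of its parent minimizing `crit` among all eligible
children, and the seat counts along `P` each increase by one. -/
def IsStepWith (crit : (Fin (T.n + 1) → ℕ) → Fin (T.n + 1) → ℝ)
    (elig : (Fin (T.n + 1) → ℕ) → Fin (T.n + 1) → Prop)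
    (P : Finset (Fin (T.n + 1))) (Vh Vh1 : Fin (T.n + 1) → ℕ) : Prop :=
  (0 : Fin (T.n + 1)) ∈ P ∧
  (∀ i ∈ P, i ≠ 0 → T.parent i ∈ P) ∧
  (∀ i ∈ P, (T.children i).Nonempty → ∃ c ∈ T.children i, c ∈ P) ∧
  (∀ c ∈ P, ∀ d ∈ P, c ≠ 0 → d ≠ 0 → T.parent c = T.parent d → c = d) ∧
  (∀ c ∈ P, c ≠ 0 → elig Vh c ∧
    ∀ d ∈ T.children (T.parent c), elig Vh d → crit Vh c ≤ crit Vh d) ∧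
  (∀ i, Vh1 i = Vh i + if i ∈ P then 1 else 0)

/-- `V : ℕ → (nodes → ℕ)` is a run of the iterative method given by `crit` and
`elig` (with arbitrary tie-breaking): `V 0` is the all-zero allocation and each
`V (h+1)` is obtained from `V h` by allocating one more seat along a path. -/
def IsRun (crit : (Fin (T.n + 1) → ℕ) → Fin (T.n + 1) → ℝ)
    (elig : (Fin (T.n + 1) → ℕ) → Fin (T.n + 1) → Prop)
    (V : ℕ → Fin (T.n + 1) → ℕ) : Prop :=
  (∀ i, V 0 i = 0) ∧ ∀ h, ∃ P, T.IsStepWith crit elig P (V h) (V (h + 1))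

/-- Adams' criterion: a child `c` minimizing `V c / R c` receives the seat. -/
noncomputable def adamsCrit (V : Fin (T.n + 1) → ℕ) (c : Fin (T.n + 1)) : ℝ :=
  (V c : ℝ) / T.R c

/-- Jefferson's criterion: a child `c` minimizing `(V c + 1) / R c` receives the seat. -/
noncomputable def jeffersonCrit (V : Fin (T.n + 1) → ℕ) (c : Fin (T.n + 1)) : ℝ :=
  ((V c : ℝ) + 1) / T.R c

/-- Trivial eligibility constraint: every child is eligible. -/
def trivElig (_ : Fin (T.n + 1) → ℕ) (_ : Fin (T.n + 1)) : Prop := True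

/-- Eligibility constraint of the quota method: `V c / W c < V (parent c) + 1`. -/
def quotaElig (V : Fin (T.n + 1) → ℕ) (c : Fin (T.n + 1)) : Prop :=
  (V c : ℝ) / T.W c < (V (T.parent c) : ℝ) + 1

/-- Eligibility constraint of the upper-compliant quota method:
`V c / R c < (V a + 1) / R a` for every ancestor `a` of `c`. -/
def ucElig (V : Fin (T.n + 1) → ℕ) (c : Fin (T.n + 1)) : Prop :=
  ∀ a ∈ T.ancestors c, (V c : ℝ) / T.R c < ((V a : ℝ) + 1) / T.R a

end MLA

/-! The entitlements `R c` of the children of `i` add up to `R i` and their seats to `V i`, so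
`V i / R i` is the mediant of the ratios `V c / R c`, and some child has ratio at most `V i / R i`.
Every upper bound required of the child then follows from the hypothesis on `i`, except the one
coming from `i` itself, which is `V i < V i + 1`. -/

namespace MLA

variable {T : MLA} {i c a : Fin (T.n + 1)}

theorem mem_children : c ∈ T.children i ↔ c ≠ 0 ∧ T.parent c = i :=
  Finset.mem_filter_univ c

theorem ancestors_of_mem_children (hc : c ∈ T.children i) :
    T.ancestors c = insert i (T.ancestors i) := by
  obtain ⟨hc₀, rfl⟩ := mem_children.mp hc
  rw [ancestors, dif_neg hc₀]

theorem le_of_mem_ancestors (ha : a ∈ T.ancestors i) : a ≤ i := by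
  induction i using WellFoundedLT.induction with
  | ind i ih =>
    rw [ancestors] at ha
    split_ifs at ha with hi₀
    · rw [Finset.mem_singleton.mp ha, hi₀]
    · have hlt : T.parent i < i := T.parent_lt i hi₀
      rcases Finset.mem_insert.mp ha with rfl | ha
      · exact hlt.le
      · exact (ih _ hlt ha).trans hlt.le

theorem lt_of_mem_ancestors (hi₀ : i ≠ 0) (ha : a ∈ T.ancestors i) : a < i := by
  have hlt : T.parent i < i := T.parent_lt i hi₀
  rw [ancestors, dif_neg hi₀, Finset.mem_insert] at ha
  rcases ha with rfl | ha
  · exact hlt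
  · exact (le_of_mem_ancestors ha).trans_lt hlt

theorem R_pos (T : MLA) (i : Fin (T.n + 1)) : 0 < T.R i :=
  Finset.prod_pos fun a _ => T.W_pos a

theorem R_of_mem_children (hc : c ∈ T.children i) : T.R c = T.W c * T.R i := by
  have hnotMem : c ∉ T.ancestors c := fun hcc =>
    (lt_of_mem_ancestors (mem_children.mp hc).1 hcc).false
  rw [R, Finset.prod_insert hnotMem, ancestors_of_mem_children hc, R]

theorem sum_R_children (hi : (T.children i).Nonempty) : ∑ c ∈ T.children i, T.R c = T.R i := by
  have hW : ∑ c ∈ T.children i, T.W c = 1 := T.W_sum i hi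
  rw [Finset.sum_congr rfl fun _ => R_of_mem_children, ← Finset.sum_mul, hW, one_mul]

theorem exists_mem_children_div_R_le {V : Fin (T.n + 1) → ℝ} (hi : (T.children i).Nonempty)
    (hV : ∑ c ∈ T.children i, V c ≤ V i) :
    ∃ c ∈ T.children i, V c / T.R c ≤ V i / T.R i := by
  have hsum : ∑ c ∈ T.children i, V c ≤ ∑ c ∈ T.children i, V i / T.R i * T.R c := by
    rwa [← Finset.mul_sum, sum_R_children hi, div_mul_cancel₀ _ (T.R_pos i).ne']
  obtain ⟨c, hc, hle⟩ := Finset.exists_le_of_sum_le hi hsum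
  exact ⟨c, hc, (div_le_iff₀ (T.R_pos c)).mpr hle⟩

end MLA

theorem uc_quota_method_well_defined_general (T : MLA) (V : Fin (T.n + 1) → ℝ)
    (i : Fin (T.n + 1)) (hi : (T.children i).Nonempty) (hV : ∑ c ∈ T.children i, V c ≤ V i)
    (hyp : ∀ a ∈ T.ancestors i, V i / T.R i < (V a + 1) / T.R a) :
    ∃ c ∈ T.children i, ∀ a ∈ T.ancestors c, V c / T.R c < (V a + 1) / T.R a := by
  obtain ⟨c, hc, hle⟩ := MLA.exists_mem_children_div_R_le hi hV
  have hself : V i / T.R i < (V i + 1) / T.R i :=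
    div_lt_div_of_pos_right (lt_add_one _) (T.R_pos i)
  refine ⟨c, hc, fun a ha => hle.trans_lt ?_⟩
  rw [MLA.ancestors_of_mem_children hc, Finset.mem_insert] at ha
  rcases ha with rfl | ha
  · exact hself
  · exact hyp a ha

/-- If `V` is an allocation of `h` seats, `i` is a non-leaf
node, and `V_i / R_i < (V_a + 1)/R_a` for every ancestor `a` of `i`, then some
child `c` of `i` satisfies `V_c / R_c < (V_a + 1)/R_a` for every
`a ∈ A(i) ∪ {i}`; that is (since `A(c) = A(i) ∪ {i}`), some child of `i` is
eligible in the upper-compliant multi-level quota method, so that method is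
well-defined. -/
theorem uc_quota_method_well_defined (T : MLA) (h : ℕ) (V : Fin (T.n + 1) → ℕ)
    (hV : T.IsAlloc h V) (i : Fin (T.n + 1)) (hi : (T.children i).Nonempty)
    (hyp : ∀ a ∈ T.ancestors i, (V i : ℝ) / T.R i < ((V a : ℝ) + 1) / T.R a) :
    ∃ c ∈ T.children i,
      (∀ a ∈ insert i (T.ancestors i), (V c : ℝ) / T.R c < ((V a : ℝ) + 1) / T.R a) ∧
      T.ucElig V c := by
  obtain ⟨c, hc, helig⟩ := uc_quota_method_well_defined_general T (fun j => V j) i hi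
    (mod_cast (hV.2 i hi).ge) hyp
  exact ⟨c, hc, MLA.ancestors_of_mem_children hc ▸ helig, helig⟩
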